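/- Let R be a right artinian ring with φ-dim(R) = 0. Then every indecomposable projective right R-module has simple socle. -/

import Mathlib

open Module Function

universe u

variable (R : Type u) [Ring R]

/-- A finitely generated right `R`-module, encoded as a module over `Rᵐᵒᵖ`. -/
structure FGMod where
  carrier : Type u
  [isAddCommGroup : AddCommGroup carrier]
  [isModule : Module Rᵐᵒᵖ carrier]
  [isFinite : Module.Finite Rᵐᵒᵖ carrier]

attribute [instance] FGMod.isAddCommGroup FGMod.isModule FGMod.isFinite

instance : CoeSort (FGMod R) (Type u) := ⟨FGMod.carrier⟩

variable {R}

/-- Isomorphism of f.g. right modules. -/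
def FGMod.Iso (M N : FGMod R) : Prop := Nonempty (M ≃ₗ[Rᵐᵒᵖ] N)

/-- Direct sum. -/
def FGMod.prod (M N : FGMod R) : FGMod R := ⟨M × N⟩

/-- `M^k`, the direct sum of `k` copies of `M`. -/
def FGMod.pow (M : FGMod R) (k : ℕ) : FGMod R := ⟨Fin k → M⟩

/-- `N` is (isomorphic to) a direct summand of `M`. -/
def FGMod.IsSummand (N M : FGMod R) : Prop :=
  ∃ A B : Submodule Rᵐᵒᵖ M, IsCompl A B ∧ Nonempty (N ≃ₗ[Rᵐᵒᵖ] A)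

/-- `M` is indecomposable. -/
def FGMod.Indec (M : FGMod R) : Prop :=
  Nontrivial M ∧ ∀ A B : Submodule Rᵐᵒᵖ M, IsCompl A B → A = ⊥ ∨ B = ⊥

/-- `M` is projective. -/
def FGMod.Proj (M : FGMod R) : Prop := Module.Projective Rᵐᵒᵖ M

/-- `f : P → M` is a projective cover: `P` projective, `f` surjective with superfluous kernel. -/
def IsProjCover (M P : FGMod R) (f : P →ₗ[Rᵐᵒᵖ] M) : Prop :=
  P.Proj ∧ Surjective f ∧ ∀ N : Submodule Rᵐᵒᵖ P, N ⊔ LinearMap.ker f = ⊤ → N = ⊤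

/-- `N` is a (first) syzygy of `M`: the kernel of a projective cover of `M`. -/
def IsSyzygy (M N : FGMod R) : Prop :=
  ∃ (P : FGMod R) (f : P →ₗ[Rᵐᵒᵖ] M),
    IsProjCover M P f ∧ Nonempty (N ≃ₗ[Rᵐᵒᵖ] LinearMap.ker f)

/-- `N` is an `n`-th syzygy of `M`. -/
def IsSyzygyN : ℕ → FGMod R → FGMod R → Prop
  | 0, M, N => M.Iso N
  | n+1, M, N => ∃ L, IsSyzygy M L ∧ IsSyzygyN n L N

/-- `M` has projective dimension at most `n`. -/
def HasPdLE : ℕ → FGMod R → Prop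
  | 0, M => M.Proj
  | n+1, M => M.Proj ∨ ∃ N, IsSyzygy M N ∧ HasPdLE n N

/-- `M` has finite projective dimension. -/
def FinPd (M : FGMod R) : Prop := ∃ n, HasPdLE n M

/-- The projective dimension of `M` (junk value if infinite). -/
noncomputable def pdIT (M : FGMod R) : ℕ := sInf {n | HasPdLE n M}

variable (R)

/-- The Igusa–Todorov relations in the free abelian group on f.g. right modules:
`[A] - [B] - [C]` whenever `A ≅ B ⊕ C`, and `[P]` for `P` projective. -/
def ITRel : Set (FreeAbelianGroup (FGMod R)) :=
  {x | ∃ A B C : FGMod R, Nonempty (A ≃ₗ[Rᵐᵒᵖ] (B × C : Type u)) ∧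
        x = FreeAbelianGroup.of A - FreeAbelianGroup.of B - FreeAbelianGroup.of C} ∪
  {x | ∃ P : FGMod R, P.Proj ∧ x = FreeAbelianGroup.of P}

/-- The Igusa–Todorov group `K`. -/
def ITK := FreeAbelianGroup (FGMod R) ⧸ AddSubgroup.closure (ITRel R)

noncomputable instance : AddCommGroup (ITK R) :=
  QuotientAddGroup.Quotient.addCommGroup _

/-- The class `[M]` in `K`. -/
noncomputable def ITcls (M : FGMod R) : ITK R := QuotientAddGroup.mk (FreeAbelianGroup.of M)

/-- `⟨M⟩`: the subgroup of `K` generated by the indecomposable non-projective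
direct summands of `M`. -/
noncomputable def ITgen (M : FGMod R) : AddSubgroup (ITK R) :=
  AddSubgroup.closure
    {x | ∃ N : FGMod R, N.IsSummand M ∧ N.Indec ∧ ¬N.Proj ∧ x = ITcls R N}

/-- The rank of a subgroup of `K`. -/
noncomputable def rkIT (H : AddSubgroup (ITK R)) : ℕ :=
  Module.finrank ℤ (AddSubgroup.toIntSubmodule H)

/-- `OmK` is a syzygy endomorphism of `K`: a group endomorphism sending `[M]` to `[ΩM]`. -/
def IsSyzygyEnd (OmK : AddMonoid.End (ITK R)) : Prop :=
  ∀ M N : FGMod R, IsSyzygy M N → OmK (ITcls R M) = ITcls R N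

/-- The Igusa–Todorov function `φ`: the least `n` such that the rank of
`Ω^i⟨M⟩` equals that of `Ω^n⟨M⟩` for all `i ≥ n`. -/
noncomputable def phiIT (OmK : AddMonoid.End (ITK R)) (M : FGMod R) : ℕ :=
  sInf {n | ∀ i, n ≤ i →
    rkIT R ((ITgen R M).map ((OmK ^ i : AddMonoid.End (ITK R)) : ITK R →+ ITK R))
      = rkIT R ((ITgen R M).map ((OmK ^ n : AddMonoid.End (ITK R)) : ITK R →+ ITK R))}

/-- The second Igusa–Todorov function `ψ`. -/
noncomputable def psiIT (OmK : AddMonoid.End (ITK R)) (M : FGMod R) : ℕ :=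
  phiIT R OmK M + sSup {d | ∃ N X : FGMod R, IsSyzygyN (phiIT R OmK M) M N ∧
      X.IsSummand N ∧ FinPd X ∧ d = pdIT X}

/-- The socle of a module: the sum of its simple submodules. -/
def socleIT (M : FGMod R) : Submodule Rᵐᵒᵖ M :=
  sSup {S : Submodule Rᵐᵒᵖ M | IsSimpleModule Rᵐᵒᵖ S}


section Aux

variable {S : Type*} [Ring S] {X Y M : Type*} [AddCommGroup X] [Module S X]
  [AddCommGroup Y] [Module S Y] [AddCommGroup M] [Module S M]

/-- Fitting dichotomy. -/
lemma aux_fitting [IsArtinian S X] [IsNoetherian S X]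
    (h : ∀ A B : Submodule S X, IsCompl A B → A = ⊥ ∨ B = ⊥) (e : Module.End S X) :
    IsUnit e ∨ IsNilpotent e := by
  obtain ⟨n, hn⟩ := (e.eventually_isCompl_ker_pow_range_pow.and
    (Filter.eventually_ge_atTop 1)).exists
  rcases h _ _ hn.1 with h0 | h0
  · left
    have hinj : Injective (e ^ n) := LinearMap.ker_eq_bot.mp h0
    have : Injective e := by
      obtain ⟨m, rfl⟩ := Nat.exists_eq_add_of_le' hn.2
      rw [pow_succ] at hinj
      exact Injective.of_comp (f := (e ^ m : Module.End S X)) hinj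
    exact (Module.End.isUnit_iff _).2 (IsArtinian.bijective_of_injective_endomorphism _ this)
  · right
    exact ⟨n, LinearMap.range_eq_bot.mp h0⟩

lemma aux_local [IsArtinian S X] [IsNoetherian S X] [Nontrivial X]
    (h : ∀ A B : Submodule S X, IsCompl A B → A = ⊥ ∨ B = ⊥) :
    IsLocalRing (Module.End S X) := by
  refine IsLocalRing.of_isUnit_or_isUnit_one_sub_self fun a => ?_
  rcases aux_fitting h a with h | h
  · exact Or.inl h
  · exact Or.inr h.isUnit_one_sub

/-- a split mono gives a decomposition -/
lemma aux_split (f : X →ₗ[S] M) (g : M →ₗ[S] X) (hgf : g ∘ₗ f = LinearMap.id) :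
    IsCompl (LinearMap.range f) (LinearMap.ker g) := by
  have hx : ∀ x, g (f x) = x := fun x => LinearMap.congr_fun hgf x
  constructor
  · rw [Submodule.disjoint_def]
    rintro _ ⟨x, rfl⟩ h
    rw [LinearMap.mem_ker, hx] at h
    simp [h]
  · rw [codisjoint_iff, eq_top_iff]
    intro m _
    rw [← add_sub_cancel (f (g m)) m]
    exact Submodule.add_mem_sup ⟨_, rfl⟩ (by simp [hx])

lemma aux_iso [Nontrivial X] (h : ∀ A B : Submodule S M, IsCompl A B → A = ⊥ ∨ B = ⊥)
    (f : X →ₗ[S] M) (g : M →ₗ[S] X) (hgf : IsUnit (g ∘ₗ f : Module.End S X)) :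
    Nonempty (X ≃ₗ[S] M) := by
  obtain ⟨u, hu⟩ := hgf
  have h1 : ((u⁻¹ : (Module.End S X)ˣ).1 ∘ₗ g) ∘ₗ f = LinearMap.id := by
    rw [LinearMap.comp_assoc, ← hu]
    exact u.inv_mul
  have hx : ∀ x, ((u⁻¹ : (Module.End S X)ˣ).1 ∘ₗ g) (f x) = x := fun x => LinearMap.congr_fun h1 x
  have hinj : Injective f := LeftInverse.injective hx
  rcases h _ _ (aux_split _ _ h1) with h0 | h0
  · exfalso
    rw [LinearMap.range_eq_bot] at h0
    obtain ⟨x, y, hxy⟩ := exists_pair_ne X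
    exact hxy (hinj (by simp [h0]))
  · refine ⟨LinearEquiv.ofBijective f ⟨hinj, fun m => ⟨_, (LinearMap.ker_eq_bot.mp h0) (hx _)⟩⟩⟩

/-- Proper submodules of an indecomposable projective are superfluous. -/
lemma aux_superfluous [IsArtinian S X] [IsNoetherian S X] [Module.Projective S X]
    (h : ∀ A B : Submodule S X, IsCompl A B → A = ⊥ ∨ B = ⊥)
    (L N : Submodule S X) (hL : L ≠ ⊤) (hN : N ⊔ L = ⊤) : N = ⊤ := by
  have hsurj : Surjective (L.mkQ ∘ₗ N.subtype) := by
    intro y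
    obtain ⟨x, rfl⟩ := L.mkQ_surjective y
    obtain ⟨n, hn, l, hl, rfl⟩ := Submodule.mem_sup.1 (hN ▸ Submodule.mem_top : x ∈ N ⊔ L)
    exact ⟨⟨n, hn⟩, by simp [hl]⟩
  obtain ⟨g, hg⟩ := Module.projective_lifting_property _ L.mkQ hsurj
  have hmod : ∀ x, L.mkQ (g x : X) = L.mkQ x := fun x => LinearMap.congr_fun hg x
  rcases aux_fitting h (N.subtype ∘ₗ g) with hu | ⟨n, hn⟩
  · rw [eq_top_iff]
    intro x _
    obtain ⟨y, rfl⟩ := ((Module.End.isUnit_iff _).1 hu).2 x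
    exact (g y).2
  · exfalso
    apply hL
    have : ∀ n x, L.mkQ (((N.subtype ∘ₗ g : Module.End S X) ^ n) x) = L.mkQ x := by
      intro n
      induction n with
      | zero => intro x; simp
      | succ k ih =>
        intro x
        rw [pow_succ, Module.End.mul_apply, ih]
        exact hmod x
    rw [eq_top_iff]
    intro x _
    have := this n x
    rw [hn] at this
    exact (Submodule.Quotient.mk_eq_zero L).1 (by simpa using this.symm)

/-- The radical submodule of `Hom(M, X)` over `End X`. -/
def auxN (S : Type*) [Ring S] (X M : Type*) [AddCommGroup X] [Module S X] [AddCommGroup M]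
    [Module S M] [IsArtinian S X] [IsLocalRing (Module.End S X)] :
    Submodule (Module.End S X) (M →ₗ[S] X) where
  carrier := {g | ∀ f : X →ₗ[S] M, ¬ IsUnit (g ∘ₗ f : Module.End S X)}
  zero_mem' := fun f => by
    rw [LinearMap.zero_comp]; exact not_isUnit_zero
  add_mem' := fun {a b} ha hb f => by
    rw [LinearMap.add_comp]
    exact IsLocalRing.nonunits_add (ha f) (hb f)
  smul_mem' := fun c g hg f hu => hg f <| by
    rw [Module.End.isUnit_iff] at hu ⊢
    apply IsArtinian.bijective_of_injective_endomorphism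
    exact Injective.of_comp (f := c) hu.1

variable [IsArtinian S X] [IsLocalRing (Module.End S X)]

lemma mem_auxN {g : M →ₗ[S] X} : g ∈ auxN S X M ↔
    ∀ f : X →ₗ[S] M, ¬ IsUnit (g ∘ₗ f : Module.End S X) := Iff.rfl

variable (S X M) in
/-- multiplicity -/
noncomputable def auxLen : ℕ∞ :=
  Module.length (Module.End S X) ((M →ₗ[S] X) ⧸ auxN S X M)

lemma auxLen_zero (h : ∀ (f : X →ₗ[S] M) (g : M →ₗ[S] X),
    ¬ IsUnit (g ∘ₗ f : Module.End S X)) : auxLen S X M = 0 := by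
  have : auxN S X M = ⊤ := by
    rw [eq_top_iff]; intro g _ f; exact h f g
  rw [auxLen, Module.length_eq_zero_iff, this]
  exact Submodule.Quotient.subsingleton_iff.2 rfl

lemma auxLen_self [IsNoetherian S X] : auxLen S X X = 1 := by
  rw [auxLen, Module.length_eq_one_iff, isSimpleModule_iff_isCoatom]
  have hnot : ∀ g : X →ₗ[S] X, g ∉ auxN S X X → IsUnit (g : Module.End S X) := by
    intro g hg
    simp only [mem_auxN, not_forall, not_not] at hg
    obtain ⟨f, hf⟩ := hg
    rw [Module.End.isUnit_iff] at hf ⊢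
    exact IsNoetherian.bijective_of_surjective_endomorphism _ (Surjective.of_comp hf.2)
  constructor
  · intro h
    have h1 : (LinearMap.id : X →ₗ[S] X) ∈ auxN S X X := h ▸ Submodule.mem_top
    exact h1 LinearMap.id isUnit_one
  · intro N hN
    obtain ⟨g, hgN, hg⟩ := SetLike.exists_of_lt hN
    obtain ⟨u, hu⟩ := hnot g hg
    rw [eq_top_iff]
    intro k _
    have : k = ((k * (u⁻¹ : (Module.End S X)ˣ).1 : Module.End S X)) • g := by
      change k = (k * (u⁻¹ : (Module.End S X)ˣ).1 : Module.End S X) * g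
      rw [← hu]; simp
    rw [this]
    exact N.smul_mem _ hgN

lemma auxLen_add {A B C : Type*} [AddCommGroup A] [Module S A] [AddCommGroup B] [Module S B]
    [AddCommGroup C] [Module S C] (e : A ≃ₗ[S] B × C) :
    auxLen S X A = auxLen S X B + auxLen S X C := by
  let i1 : B →ₗ[S] A := e.symm.toLinearMap ∘ₗ LinearMap.inl S B C
  let i2 : C →ₗ[S] A := e.symm.toLinearMap ∘ₗ LinearMap.inr S B C
  let p1 : A →ₗ[S] B := LinearMap.fst S B C ∘ₗ e.toLinearMap
  let p2 : A →ₗ[S] C := LinearMap.snd S B C ∘ₗ e.toLinearMap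
  have hid : ∀ a, i1 (p1 a) + i2 (p2 a) = a := by
    intro a
    simp only [i1, i2, p1, p2, LinearMap.comp_apply, LinearEquiv.coe_coe, ← map_add]
    simp
  have h11 : ∀ b, p1 (i1 b) = b := fun b => by simp [i1, p1]
  have h22 : ∀ b, p2 (i2 b) = b := fun b => by simp [i2, p2]
  have h12 : ∀ b, p1 (i2 b) = 0 := fun b => by simp [i2, p1]
  have h21 : ∀ b, p2 (i1 b) = 0 := fun b => by simp [i1, p2]
  let r1 : (A →ₗ[S] X) →ₗ[Module.End S X] (B →ₗ[S] X) :=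
    { toFun := fun g => g ∘ₗ i1, map_add' := fun _ _ => rfl, map_smul' := fun _ _ => rfl }
  let r2 : (A →ₗ[S] X) →ₗ[Module.End S X] (C →ₗ[S] X) :=
    { toFun := fun g => g ∘ₗ i2, map_add' := fun _ _ => rfl, map_smul' := fun _ _ => rfl }
  let F := ((auxN S X B).mkQ ∘ₗ r1).prod ((auxN S X C).mkQ ∘ₗ r2)
  have hF : Surjective F := by
    rintro ⟨y1, y2⟩
    obtain ⟨g1, rfl⟩ := (auxN S X B).mkQ_surjective y1
    obtain ⟨g2, rfl⟩ := (auxN S X C).mkQ_surjective y2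
    refine ⟨g1 ∘ₗ p1 + g2 ∘ₗ p2, ?_⟩
    have e1 : r1 (g1 ∘ₗ p1 + g2 ∘ₗ p2) = g1 := by
      ext b; simp [r1, h11, h21]
    have e2 : r2 (g1 ∘ₗ p1 + g2 ∘ₗ p2) = g2 := by
      ext b; simp [r2, h22, h12]
    change ((auxN S X B).mkQ (r1 _), (auxN S X C).mkQ (r2 _)) = _
    rw [e1, e2]
  have hk : LinearMap.ker F = auxN S X A := by
    ext g
    have : g ∈ LinearMap.ker F ↔ r1 g ∈ auxN S X B ∧ r2 g ∈ auxN S X C := by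
      simp [F]
    rw [this]
    constructor
    · rintro ⟨h1, h2⟩ f
      have : g ∘ₗ f = r1 g ∘ₗ (p1 ∘ₗ f) + r2 g ∘ₗ (p2 ∘ₗ f) := by
        ext x
        simp only [r1, r2, LinearMap.coe_mk, AddHom.coe_mk, LinearMap.add_apply,
          LinearMap.comp_apply, ← map_add, hid]
      rw [this]
      exact IsLocalRing.nonunits_add (h1 _) (h2 _)
    · intro h
      exact ⟨fun f => h (i1 ∘ₗ f), fun f => h (i2 ∘ₗ f)⟩
  rw [auxLen, auxLen, auxLen, ← Module.length_prod, ← hk]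
  exact (F.quotKerEquivOfSurjective hF).length_eq

end Aux

section Main

variable {R : Type u} [Ring R]

lemma FGMod.isSummand_of_split {N M : FGMod R} (f : N →ₗ[Rᵐᵒᵖ] M) (g : M →ₗ[Rᵐᵒᵖ] N)
    (h : g ∘ₗ f = LinearMap.id) : N.IsSummand M :=
  ⟨_, _, aux_split f g h, ⟨LinearEquiv.ofInjective f
    (LeftInverse.injective (g := g) fun x => LinearMap.congr_fun h x)⟩⟩

lemma FGMod.IsSummand.split {N M : FGMod R} (h : N.IsSummand M) :
    ∃ (f : N →ₗ[Rᵐᵒᵖ] M) (g : M →ₗ[Rᵐᵒᵖ] N), g ∘ₗ f = LinearMap.id := by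
  obtain ⟨A, B, hAB, ⟨e⟩⟩ := h
  refine ⟨A.subtype ∘ₗ e.toLinearMap,
    e.symm.toLinearMap ∘ₗ LinearMap.fst _ _ _ ∘ₗ
      (Submodule.prodEquivOfIsCompl A B hAB).symm.toLinearMap, ?_⟩
  ext x
  simp

lemma ITcls_add {A B C : FGMod R} (e : A ≃ₗ[Rᵐᵒᵖ] (B × C : Type u)) :
    ITcls R A = ITcls R B + ITcls R C := by
  have : ITcls R A - ITcls R B - ITcls R C = 0 := by
    refine (QuotientAddGroup.eq_zero_iff
      (FreeAbelianGroup.of A - FreeAbelianGroup.of B - FreeAbelianGroup.of C)).2 ?_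
    exact AddSubgroup.subset_closure (Or.inl ⟨A, B, C, ⟨e⟩, rfl⟩)
  rw [sub_sub, sub_eq_zero] at this
  exact this

lemma ITcls_proj {P : FGMod R} (h : P.Proj) : ITcls R P = 0 :=
  (QuotientAddGroup.eq_zero_iff (FreeAbelianGroup.of P)).2
    (AddSubgroup.subset_closure (Or.inr ⟨P, h, rfl⟩))

/-- zero module -/
def FGMod.zero (R : Type u) [Ring R] : FGMod R := ⟨PUnit.{u+1}⟩

/-- a module plus zero -/
def auxProdZero {A B : FGMod R} (e : A ≃ₗ[Rᵐᵒᵖ] B) :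
    A ≃ₗ[Rᵐᵒᵖ] (B × FGMod.zero R : Type u) :=
  e.trans
    { toFun := fun b => (b, PUnit.unit)
      map_add' := fun _ _ => rfl
      map_smul' := fun _ _ => rfl
      invFun := fun p => p.1
      left_inv := fun _ => rfl
      right_inv := fun _ => rfl }

lemma ITcls_iso {A B : FGMod R} (e : A ≃ₗ[Rᵐᵒᵖ] B) : ITcls R A = ITcls R B := by
  rw [ITcls_add (auxProdZero e), ITcls_proj (P := FGMod.zero R), add_zero]
  change Module.Projective Rᵐᵒᵖ PUnit.{u+1}
  infer_instance

variable [IsArtinianRing Rᵐᵒᵖ]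

instance (M : FGMod R) : IsArtinian Rᵐᵒᵖ M := inferInstance
instance (M : FGMod R) : IsNoetherian Rᵐᵒᵖ M := inferInstance

lemma FGMod.Indec.isLocal {X : FGMod R} (h : X.Indec) : IsLocalRing (Module.End Rᵐᵒᵖ X) :=
  have := h.1
  aux_local h.2

lemma auxLen_iso {X A B : FGMod R} [IsLocalRing (Module.End Rᵐᵒᵖ X)] (hX : X.Indec)
    (e : A ≃ₗ[Rᵐᵒᵖ] B) : auxLen Rᵐᵒᵖ X A = auxLen Rᵐᵒᵖ X B := by
  rw [auxLen_add (auxProdZero e), auxLen_zero (M := FGMod.zero R), add_zero]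
  intro f g hu
  have := hX.1
  have h0 : (g ∘ₗ f : Module.End Rᵐᵒᵖ X) = 0 := by
    ext x
    change g PUnit.unit = 0
    exact g.map_zero
  rw [h0] at hu
  exact not_isUnit_zero hu

lemma auxLen_indec {X M : FGMod R} [IsLocalRing (Module.End Rᵐᵒᵖ X)] (hX : X.Indec)
    (hM : M.Indec) (hne : IsEmpty (X ≃ₗ[Rᵐᵒᵖ] M)) : auxLen Rᵐᵒᵖ X M = 0 := by
  have := hX.1
  exact auxLen_zero fun f g hu => not_nonempty_iff.2 hne (aux_iso hM.2 f g hu)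

lemma auxLen_proj {X M : FGMod R} [IsLocalRing (Module.End Rᵐᵒᵖ X)]
    (hX : ¬ X.Proj) (hM : M.Proj) : auxLen Rᵐᵒᵖ X M = 0 := by
  refine auxLen_zero fun f g hu => hX ?_
  obtain ⟨u, hu⟩ := hu
  have h1 : ((u⁻¹ : (Module.End Rᵐᵒᵖ X)ˣ).1 ∘ₗ g) ∘ₗ f = LinearMap.id := by
    rw [LinearMap.comp_assoc, ← hu]
    exact u.inv_mul
  have : Module.Projective Rᵐᵒᵖ M := hM
  exact Module.Projective.of_split f _ h1

lemma auxLen_ne_top {X : FGMod R} [IsLocalRing (Module.End Rᵐᵒᵖ X)] (hX : X.Indec) :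
    ∀ (n : ℕ) (M : FGMod R), Module.length Rᵐᵒᵖ M = n → auxLen Rᵐᵒᵖ X M ≠ ⊤ := by
  intro n
  induction n using Nat.strong_induction_on with
  | _ n ih =>
    intro M hn
    by_cases hM : M.Indec
    · by_cases hne : Nonempty (X ≃ₗ[Rᵐᵒᵖ] M)
      · obtain ⟨e⟩ := hne
        rw [← auxLen_iso hX e, auxLen_self]
        simp
      · rw [auxLen_indec hX hM (not_nonempty_iff.1 hne)]
        simp
    · by_cases ht : Nontrivial M
      · simp only [FGMod.Indec, ht, true_and, not_forall, not_or] at hM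
        obtain ⟨A, B, hAB, hA, hB⟩ := hM
        have hlen : ∀ D : Submodule Rᵐᵒᵖ M, D ≠ ⊤ → auxLen Rᵐᵒᵖ X D ≠ ⊤ := by
          intro D hD
          have h1 := Submodule.length_lt hD
          rw [hn] at h1
          obtain ⟨k, hk⟩ := ENat.ne_top_iff_exists.1 (ne_top_of_lt h1)
          rw [← hk] at h1
          exact ih k (by exact_mod_cast h1) ⟨D⟩ hk.symm
        rw [auxLen_add (Submodule.prodEquivOfIsCompl A B hAB).symm]
        refine WithTop.add_ne_top.2 ⟨hlen A ?_, hlen B ?_⟩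
        · rintro rfl
          exact hB (by simpa using hAB.inf_eq_bot)
        · rintro rfl
          exact hA (by simpa using hAB.inf_eq_bot)
      · rw [not_nontrivial_iff_subsingleton] at ht
        rw [auxLen_zero]
        · simp
        intro f g hu
        have := hX.1
        have h0 : (g ∘ₗ f : Module.End Rᵐᵒᵖ X) = 0 := by
          ext x
          change g (f x) = 0
          rw [Subsingleton.elim (f x) 0, map_zero]
        rw [h0] at hu
        exact not_isUnit_zero hu

lemma auxLen_fin {X : FGMod R} [IsLocalRing (Module.End Rᵐᵒᵖ X)] (hX : X.Indec) (M : FGMod R) :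
    auxLen Rᵐᵒᵖ X M ≠ ⊤ := by
  obtain ⟨k, hk⟩ := ENat.ne_top_iff_exists.1 (Module.length_ne_top (R := Rᵐᵒᵖ) (M := M))
  exact auxLen_ne_top hX k M hk.symm

lemma exists_mult {X : FGMod R} (hX : X.Indec) (hXp : ¬ X.Proj) :
    ∃ m : ITK R →+ ℤ, m (ITcls R X) = 1 ∧
      ∀ M : FGMod R, M.Indec → IsEmpty (X ≃ₗ[Rᵐᵒᵖ] M) → m (ITcls R M) = 0 := by
  have := hX.isLocal
  let m0 : FreeAbelianGroup (FGMod R) →+ ℤ :=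
    FreeAbelianGroup.lift fun M => ((auxLen Rᵐᵒᵖ X M).toNat : ℤ)
  have hm0 : ∀ M, m0 (FreeAbelianGroup.of M) = ((auxLen Rᵐᵒᵖ X M).toNat : ℤ) :=
    fun M => FreeAbelianGroup.lift_apply_of _ _
  have hle : AddSubgroup.closure (ITRel R) ≤ m0.ker := by
    rw [AddSubgroup.closure_le]
    rintro x (⟨A, B, C, ⟨e⟩, rfl⟩ | ⟨P, hP, rfl⟩)
    · simp only [SetLike.mem_coe, AddMonoidHom.mem_ker, map_sub, hm0]
      rw [auxLen_add e, ENat.toNat_add (auxLen_fin hX B) (auxLen_fin hX C)]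
      push_cast
      ring
    · simp only [SetLike.mem_coe, AddMonoidHom.mem_ker, hm0]
      rw [auxLen_proj hXp hP]
      simp
  let m : ITK R →+ ℤ := QuotientAddGroup.lift _ m0 hle
  have hm : ∀ M, m (ITcls R M) = ((auxLen Rᵐᵒᵖ X M).toNat : ℤ) := fun M => hm0 M
  refine ⟨m, ?_, fun M hM he => ?_⟩
  · rw [hm, auxLen_self]; simp
  · rw [hm, auxLen_indec hX hM he]; simp

lemma unit_component {N A B : FGMod R} (hN : N.Indec)
    (f : N →ₗ[Rᵐᵒᵖ] (A × B : Type u)) (g : (A × B : Type u) →ₗ[Rᵐᵒᵖ] N)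
    (h : IsUnit (g ∘ₗ f : Module.End Rᵐᵒᵖ N)) :
    (∃ (f : N →ₗ[Rᵐᵒᵖ] A) (g : A →ₗ[Rᵐᵒᵖ] N), IsUnit (g ∘ₗ f : Module.End Rᵐᵒᵖ N)) ∨
    (∃ (f : N →ₗ[Rᵐᵒᵖ] B) (g : B →ₗ[Rᵐᵒᵖ] N), IsUnit (g ∘ₗ f : Module.End Rᵐᵒᵖ N)) := by
  have := hN.isLocal
  have e : (g ∘ₗ f : Module.End Rᵐᵒᵖ N) =
      (g ∘ₗ LinearMap.inl _ _ _) ∘ₗ (LinearMap.fst _ _ _ ∘ₗ f) +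
      (g ∘ₗ LinearMap.inr _ _ _) ∘ₗ (LinearMap.snd _ _ _ ∘ₗ f) := by
    ext x
    simp [← map_add]
  rw [e] at h
  rcases IsLocalRing.isUnit_or_isUnit_of_isUnit_add h with h | h
  · exact Or.inl ⟨_, _, h⟩
  · exact Or.inr ⟨_, _, h⟩

/-- `⟨A ⊕ B ⊕ C⟩` for indecomposables is finitely generated. -/
lemma ITgen_fg {A B C : FGMod R} (hA : A.Indec) (hB : B.Indec) (hC : C.Indec) :
    (ITgen R ((A.prod B).prod C)).FG := by
  have hsub : {x | ∃ N : FGMod R, N.IsSummand ((A.prod B).prod C) ∧ N.Indec ∧ ¬N.Proj ∧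
      x = ITcls R N} ⊆ {ITcls R A, ITcls R B, ITcls R C} := by
    rintro x ⟨N, hs, hN, -, rfl⟩
    obtain ⟨f, g, hfg⟩ := hs.split
    have := hN.1
    have hu : IsUnit (g ∘ₗ f : Module.End Rᵐᵒᵖ N) := by rw [hfg]; exact isUnit_one
    rcases unit_component (A := A.prod B) (B := C) hN f g hu with ⟨f, g, hu⟩ | ⟨f, g, hu⟩
    · rcases unit_component (A := A) (B := B) hN f g hu with ⟨f, g, hu⟩ | ⟨f, g, hu⟩
      · obtain ⟨e⟩ := aux_iso hA.2 f g hu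
        simp [ITcls_iso e]
      · obtain ⟨e⟩ := aux_iso hB.2 f g hu
        simp [ITcls_iso e]
    · obtain ⟨e⟩ := aux_iso hC.2 f g hu
      simp [ITcls_iso e]
  exact (AddSubgroup.fg_iff _).2 ⟨_, rfl, (Set.toFinite _).subset hsub⟩

/-- `φ(M) = 0` forces the kernel of `Ω` on `⟨M⟩` to be torsion. -/
lemma torsion_of_phi (OmK : AddMonoid.End (ITK R)) (M : FGMod R) (hfg : (ITgen R M).FG)
    (h : phiIT R OmK M = 0) (x : ITK R) (hx : x ∈ ITgen R M) (h0 : OmK x = 0) :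
    ∃ k : ℤ, k ≠ 0 ∧ k • x = 0 := by
  let H : Submodule ℤ (ITK R) := AddSubgroup.toIntSubmodule (ITgen R M)
  have hH : H.FG := by
    rw [Submodule.fg_iff_addSubgroup_fg, AddSubgroup.toIntSubmodule_toAddSubgroup]
    exact hfg
  let ω : ITK R →ₗ[ℤ] ITK R := AddMonoidHom.toIntLinearMap OmK
  have key : ∀ i, rkIT R ((ITgen R M).map ((OmK ^ i : AddMonoid.End (ITK R)) : ITK R →+ ITK R))
      = Module.finrank ℤ (H.map (ω ^ i)) := by
    intro i
    have hp : ∀ x, (OmK ^ i) x = (ω ^ i) x := by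
      induction i with
      | zero => intro x; rfl
      | succ k ih => 
        intro x
        rw [pow_succ, pow_succ]
        exact ih (OmK x)
    have : AddSubgroup.toIntSubmodule ((ITgen R M).map
        ((OmK ^ i : AddMonoid.End (ITK R)) : ITK R →+ ITK R)) = H.map (ω ^ i) := by
      ext y
      constructor
      · rintro ⟨z, hz, rfl⟩
        exact ⟨z, hz, (hp z).symm⟩
      · rintro ⟨z, hz, rfl⟩
        exact ⟨z, hz, hp z⟩
    rw [rkIT, this]
  have hanti : Antitone fun i => Module.finrank ℤ (H.map (ω ^ i)) := by
    refine antitone_nat_of_succ_le fun i => ?_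
    have hfin : Module.Finite ℤ (H.map (ω ^ i)) := Module.Finite.iff_fg.2 (hH.map _)
    have := Submodule.finrank_map_le ω (H.map (ω ^ i))
    rwa [← Submodule.map_comp, ← Module.End.mul_eq_comp, ← pow_succ'] at this
  simp only [phiIT, key] at h
  have hne : {n | ∀ i, n ≤ i → Module.finrank ℤ (H.map (ω ^ i)) =
      Module.finrank ℤ (H.map (ω ^ n))}.Nonempty := by
    obtain ⟨n, hn⟩ := WellFoundedGT.monotone_chain_condition
      (⟨fun i => OrderDual.toDual (Module.finrank ℤ (H.map (ω ^ i))), hanti⟩ : ℕ →o ℕᵒᵈ)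
    exact ⟨n, fun i hi => (hn i hi).symm⟩
  have hmem := Nat.sInf_mem hne
  rw [h] at hmem
  have h1 := hmem 1 (Nat.zero_le _)
  rw [pow_one, pow_zero, Module.End.one_eq_id, Submodule.map_id] at h1
  have hHf : Module.Finite ℤ H := Module.Finite.iff_fg.2 hH
  have h2 := Submodule.finrank_quotient_add_finrank (LinearMap.ker (ω.domRestrict H))
  rw [(ω.domRestrict H).quotKerEquivRange.finrank_eq, LinearMap.range_domRestrict, h1] at h2
  have h3 : Module.finrank ℤ (LinearMap.ker (ω.domRestrict H)) = 0 := by omega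
  rw [Module.finrank_eq_zero_iff] at h3
  obtain ⟨k, hk, hkx⟩ := h3 ⟨⟨x, hx⟩, h0⟩
  exact ⟨k, hk, congrArg (fun z : LinearMap.ker (ω.domRestrict H) => ((z : H) : ITK R)) hkx⟩

/-- proper quotients of indecomposable projectives -/
lemma quot_indec {P : FGMod R} (hP : P.Indec) (hp : P.Proj) (L : Submodule Rᵐᵒᵖ P)
    (hL : L ≠ ⊤) : FGMod.Indec (⟨P ⧸ L⟩ : FGMod R) := by
  have : Module.Projective Rᵐᵒᵖ P := hp
  have aux : ∀ A B : Submodule Rᵐᵒᵖ (P ⧸ L), A ⊔ B = ⊤ → A = ⊤ ∨ B = ⊤ := by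
    intro A B hAB
    have hs : A.comap L.mkQ ⊔ B.comap L.mkQ = ⊤ := by
      rw [eq_top_iff]
      intro x _
      obtain ⟨a, ha, b, hb, hab⟩ :=
        Submodule.mem_sup.1 (hAB ▸ Submodule.mem_top : L.mkQ x ∈ A ⊔ B)
      obtain ⟨a, rfl⟩ := L.mkQ_surjective a
      refine Submodule.mem_sup.2 ⟨a, ha, x - a, ?_, by abel⟩
      rw [Submodule.mem_comap, map_sub, ← hab, add_sub_cancel_left]
      exact hb
    have htop : ∀ D : Submodule Rᵐᵒᵖ (P ⧸ L), D.comap L.mkQ = ⊤ → D = ⊤ := by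
      intro D hD
      rw [eq_top_iff]
      intro y _
      obtain ⟨x, rfl⟩ := L.mkQ_surjective y
      exact (hD ▸ Submodule.mem_top : x ∈ D.comap L.mkQ)
    by_cases hB : B.comap L.mkQ = ⊤
    · exact Or.inr (htop _ hB)
    · exact Or.inl (htop _ (aux_superfluous hP.2 _ _ hB hs))
  refine ⟨Submodule.Quotient.nontrivial_iff.2 hL, fun A B hAB => ?_⟩
  rcases aux A B hAB.sup_eq_top with h | h
  · right
    simpa [h] using hAB.inf_eq_bot
  · left
    simpa [h] using hAB.inf_eq_bot

lemma quot_not_proj {P : FGMod R} (hP : P.Indec) (hp : P.Proj) (L : Submodule Rᵐᵒᵖ P)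
    (hL : L ≠ ⊤) (hb : L ≠ ⊥) : ¬ FGMod.Proj (⟨P ⧸ L⟩ : FGMod R) := by
  intro hq
  have : Module.Projective Rᵐᵒᵖ P := hp
  have : Module.Projective Rᵐᵒᵖ (P ⧸ L) := hq
  obtain ⟨s, hs⟩ := Module.projective_lifting_property L.mkQ LinearMap.id L.mkQ_surjective
  have hs' : ∀ y, L.mkQ (s y) = y := fun y => LinearMap.congr_fun hs y
  have htop : LinearMap.range s = ⊤ := by
    refine aux_superfluous hP.2 L _ hL ?_
    have := (aux_split s L.mkQ hs).sup_eq_top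
    rwa [Submodule.ker_mkQ] at this
  apply hb
  rw [eq_bot_iff]
  intro l hl
  obtain ⟨y, rfl⟩ := (htop ▸ Submodule.mem_top : l ∈ LinearMap.range s)
  have : L.mkQ (s y) = 0 := by simpa using hl
  rw [hs'] at this
  simp [this]

lemma quot_syzygy {P : FGMod R} (hP : P.Indec) (hp : P.Proj) (L : Submodule Rᵐᵒᵖ P)
    (hL : L ≠ ⊤) : IsSyzygy (⟨P ⧸ L⟩ : FGMod R) (⟨L⟩ : FGMod R) := by
  have : Module.Projective Rᵐᵒᵖ P := hp
  refine ⟨P, L.mkQ, ⟨hp, L.mkQ_surjective, fun N hN => ?_⟩,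
    ⟨LinearEquiv.ofEq _ _ L.ker_mkQ.symm⟩⟩
  have hN' : N ⊔ LinearMap.ker L.mkQ = ⊤ := hN
  rw [Submodule.ker_mkQ] at hN'
  exact aux_superfluous hP.2 L N hL hN'

lemma quot_not_iso {P : FGMod R} (L L' : Submodule Rᵐᵒᵖ P) (h : L < L') :
    IsEmpty ((P ⧸ L') ≃ₗ[Rᵐᵒᵖ] (P ⧸ L)) := by
  refine ⟨fun e => ?_⟩
  let q : (P ⧸ L) →ₗ[Rᵐᵒᵖ] (P ⧸ L') := Submodule.factor h.le
  have hq : Surjective q := Submodule.factor_surjective h.le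
  have hs : Surjective (e.toLinearMap ∘ₗ q) := e.surjective.comp hq
  have hb := (IsNoetherian.bijective_of_surjective_endomorphism _ hs).1
  have hqi : Injective q := Injective.of_comp (f := e) hb
  obtain ⟨x, hx, hxL⟩ := SetLike.exists_of_lt h
  apply hxL
  have h1 : q (L.mkQ x) = 0 := by
    change L'.mkQ x = 0
    simpa using hx
  have h2 : L.mkQ x = 0 := hqi (by rw [h1, map_zero])
  simpa using h2

lemma no_disjoint_pair (OmK : AddMonoid.End (ITK R)) (hOm : IsSyzygyEnd R OmK)
    (hphi : ∀ M : FGMod R, phiIT R OmK M = 0)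
    (P : FGMod R) (hind : P.Indec) (hproj : P.Proj) (L₁ L₂ : Submodule Rᵐᵒᵖ P)
    (h1 : L₁ ≠ ⊥) (h2 : L₂ ≠ ⊥) (hd : Disjoint L₁ L₂) : False := by
  have ht : L₁ ⊔ L₂ ≠ ⊤ := by
    intro h
    rcases hind.2 L₁ L₂ ⟨hd, codisjoint_iff.2 h⟩ with h | h
    · exact h1 h
    · exact h2 h
  have hlt1 : L₁ < L₁ ⊔ L₂ := by
    refine lt_of_le_of_ne le_sup_left fun h => h2 ?_
    exact hd.eq_bot_of_ge (by rw [h]; exact le_sup_right)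
  have hlt2 : L₂ < L₁ ⊔ L₂ := by
    refine lt_of_le_of_ne le_sup_right fun h => h1 ?_
    exact hd.eq_bot_of_le (by rw [h]; exact le_sup_left)
  have ht1 : L₁ ≠ ⊤ := ne_top_of_lt hlt1
  have ht2 : L₂ ≠ ⊤ := ne_top_of_lt hlt2
  have h3 : L₁ ⊔ L₂ ≠ ⊥ := ne_bot_of_gt hlt1
  let A : FGMod R := ⟨P ⧸ L₁⟩
  let B : FGMod R := ⟨P ⧸ L₂⟩
  let C : FGMod R := ⟨P ⧸ (L₁ ⊔ L₂)⟩
  have hA : A.Indec := quot_indec hind hproj L₁ ht1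
  have hB : B.Indec := quot_indec hind hproj L₂ ht2
  have hC : C.Indec := quot_indec hind hproj _ ht
  have hA' : ¬ A.Proj := quot_not_proj hind hproj L₁ ht1 h1
  have hB' : ¬ B.Proj := quot_not_proj hind hproj L₂ ht2 h2
  have hC' : ¬ C.Proj := quot_not_proj hind hproj _ ht h3
  let M := (A.prod B).prod C
  have mA : ITcls R A ∈ ITgen R M := AddSubgroup.subset_closure
    ⟨A, FGMod.isSummand_of_split
      (LinearMap.inl Rᵐᵒᵖ (A × B) C ∘ₗ LinearMap.inl Rᵐᵒᵖ A B)
      (LinearMap.fst Rᵐᵒᵖ A B ∘ₗ LinearMap.fst Rᵐᵒᵖ (A × B) C) rfl, hA, hA', rfl⟩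
  have mB : ITcls R B ∈ ITgen R M := AddSubgroup.subset_closure
    ⟨B, FGMod.isSummand_of_split
      (LinearMap.inl Rᵐᵒᵖ (A × B) C ∘ₗ LinearMap.inr Rᵐᵒᵖ A B)
      (LinearMap.snd Rᵐᵒᵖ A B ∘ₗ LinearMap.fst Rᵐᵒᵖ (A × B) C) rfl, hB, hB', rfl⟩
  have mC : ITcls R C ∈ ITgen R M := AddSubgroup.subset_closure
    ⟨C, FGMod.isSummand_of_split
      (LinearMap.inr Rᵐᵒᵖ (A × B) C) (LinearMap.snd Rᵐᵒᵖ (A × B) C) rfl, hC, hC', rfl⟩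
  have hsum : ITcls R (⟨(L₁ ⊔ L₂ : Submodule Rᵐᵒᵖ P)⟩ : FGMod R) =
      ITcls R (⟨L₁⟩ : FGMod R) + ITcls R (⟨L₂⟩ : FGMod R) := by
    apply ITcls_add
    have hinj : Injective (L₁.subtype.coprod L₂.subtype) := by
      rw [← LinearMap.ker_eq_bot, LinearMap.ker_coprod_of_disjoint_range]
      · simp
      · simpa using hd
    have hr : LinearMap.range (L₁.subtype.coprod L₂.subtype) = L₁ ⊔ L₂ := by
      rw [LinearMap.range_coprod]; simp
    exact ((LinearEquiv.ofInjective _ hinj).trans (LinearEquiv.ofEq _ _ hr)).symm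
  obtain ⟨k, hk, hkx⟩ := torsion_of_phi OmK M (ITgen_fg hA hB hC) (hphi M)
    (ITcls R A + ITcls R B - ITcls R C) (sub_mem (add_mem mA mB) mC) (by
      rw [map_sub, map_add, hOm _ _ (quot_syzygy hind hproj L₁ ht1),
        hOm _ _ (quot_syzygy hind hproj L₂ ht2), hOm _ _ (quot_syzygy hind hproj _ ht), hsum,
        sub_self])
  obtain ⟨m, hmC, hm⟩ := exists_mult hC hC'
  have := congrArg m hkx
  rw [map_zsmul, map_sub, map_add, hmC, hm A hA (quot_not_iso _ _ hlt1),
    hm B hB (quot_not_iso _ _ hlt2), map_zero] at this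
  simp at this
  exact hk this

end Main

/-- If `φ-dim(R) = 0`, then every indecomposable projective right
`R`-module has simple socle. -/
theorem simple_socle_of_phidim_eq_zero (R : Type u) [Ring R] [IsArtinianRing Rᵐᵒᵖ]
    (OmK : AddMonoid.End (ITK R)) (hOm : IsSyzygyEnd R OmK)
    (hphi : ∀ M : FGMod R, phiIT R OmK M = 0)
    (P : FGMod R) (hind : P.Indec) (hproj : P.Proj) :
    IsSimpleModule Rᵐᵒᵖ (socleIT R P) := by
  have hnt := hind.1
  obtain ⟨L, hL⟩ := IsAtomic.exists_atom (Submodule Rᵐᵒᵖ P)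
  have hLs : IsSimpleModule Rᵐᵒᵖ L := isSimpleModule_iff_isAtom.2 hL
  have hsoc : socleIT R P = L := by
    apply le_antisymm
    · refine sSup_le fun T hT => ?_
      have hT' : IsAtom T := isSimpleModule_iff_isAtom.1 hT
      by_contra hne
      refine no_disjoint_pair OmK hOm hphi P hind hproj L T hL.1 hT'.1 ?_
      exact hL.disjoint_of_ne hT' (fun h => hne h.ge)
    · exact le_sSup hLs
  rw [hsoc]
  exact hLs
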